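/- Let Y be a Banach space over ℝ such that for every Banach space Z over ℝ the pair (Z,Y) has the Bishop–Phelps–Bollobás property (that is, Y is a universal BPB range space). Then there exists a single function η_Y : (0,1) → (0,∞) such that for every Banach space X over ℝ, the pair (X,Y) has the Bishop–Phelps–Bollobás property with the function η_Y. -/

import Mathlib

open scoped ENNReal

/-- A pair `(X, Y)` of normed spaces has the Bishop–Phelps–Bollobás property with the
function `η : (0,1) → (0,∞)` (encoded as `η : ℝ → ℝ`, relevant only on `(0,1)`). -/
def BPBpWith (X Y : Type*) [NormedAddCommGroup X] [NormedSpace ℝ X]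
    [NormedAddCommGroup Y] [NormedSpace ℝ Y] (η : ℝ → ℝ) : Prop :=
  ∀ ε ∈ Set.Ioo (0 : ℝ) 1, ∀ (T₀ : X →L[ℝ] Y) (x₀ : X),
    ‖T₀‖ = 1 → ‖x₀‖ = 1 → 1 - η ε < ‖T₀ x₀‖ →
      ∃ (S : X →L[ℝ] Y) (x : X),
        ‖x‖ = 1 ∧ ‖S‖ = 1 ∧ ‖S x‖ = 1 ∧ ‖x - x₀‖ < ε ∧ ‖S - T₀‖ < ε

/-- The pair `(X, Y)` has the Bishop–Phelps–Bollobás property. -/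
def HasBPBp (X Y : Type*) [NormedAddCommGroup X] [NormedSpace ℝ X]
    [NormedAddCommGroup Y] [NormedSpace ℝ Y] : Prop :=
  ∃ η : ℝ → ℝ, (∀ ε ∈ Set.Ioo (0 : ℝ) 1, 0 < η ε) ∧ BPBpWith X Y η

/-- The BPB property passes from `Z` to an `ℓ₁`-summand `X` of `Z`. -/
theorem bpb_of_L_summand {X Y Z : Type*} [NormedAddCommGroup X] [NormedSpace ℝ X]
    [NormedAddCommGroup Y] [NormedSpace ℝ Y] [NormedAddCommGroup Z] [NormedSpace ℝ Z]
    (E : X →ₗ[ℝ] Z) (P : Z →ₗ[ℝ] X) (hPE : ∀ x, P (E x) = x)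
    (hE : ∀ x, ‖E x‖ = ‖x‖) (hP : ∀ z, ‖z - E (P z)‖ + ‖P z‖ = ‖z‖)
    {η : ℝ → ℝ} (h : BPBpWith Z Y η) : BPBpWith X Y η := by
  intro ε hε T₀ x₀ hT hx hTx
  have hPn : ∀ z, ‖P z‖ ≤ 1 * ‖z‖ := fun z => by
    have := hP z; have := norm_nonneg (z - E (P z)); linarith
  let Pc : Z →L[ℝ] X := P.mkContinuous 1 hPn
  let Ec : X →L[ℝ] Z := E.mkContinuous 1 (fun x => by rw [hE, one_mul])
  have hPc : ∀ z, Pc z = P z := fun z => rfl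
  have hEc : ∀ x, Ec x = E x := fun x => rfl
  have hTP : ‖T₀.comp Pc‖ = 1 := by
    apply le_antisymm
    · refine ContinuousLinearMap.opNorm_le_bound _ zero_le_one fun z => ?_
      have h1 := T₀.le_opNorm (P z)
      rw [hT] at h1
      have := hPn z
      simp only [ContinuousLinearMap.comp_apply, hPc]
      linarith
    · rw [← hT]
      refine ContinuousLinearMap.opNorm_le_bound _ (norm_nonneg _) fun x => ?_
      have := (T₀.comp Pc).le_opNorm (E x)
      simpa only [ContinuousLinearMap.comp_apply, hPc, hPE, hE] using this
  obtain ⟨S, z, hz, hS, hSz, hzx, hST⟩ := h ε hε (T₀.comp Pc) (E x₀) hTP (by rw [hE, hx])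
    (by simpa only [ContinuousLinearMap.comp_apply, hPc, hPE] using hTx)
  have e1 := hP z
  have e2 := hP (z - E x₀)
  rw [map_sub, hPE, map_sub, sub_sub_sub_cancel_right] at e2
  have hPz : 0 < ‖P z‖ := by
    have h3 := norm_sub_norm_le x₀ (P z)
    rw [norm_sub_rev] at h3
    have := norm_nonneg (z - E (P z))
    have := hε.2
    linarith
  have hSE : ∀ x, ‖S (E x)‖ ≤ ‖x‖ := fun x => by
    have := S.le_opNorm (E x)
    rwa [hS, hE, one_mul] at this
  have hSP : ‖S (E (P z))‖ = ‖P z‖ := by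
    apply le_antisymm (hSE _)
    have h1 := S.le_opNorm (z - E (P z))
    rw [hS, map_sub] at h1
    have h2 := norm_sub_norm_le (S z) (S (E (P z)))
    linarith
  have hu : ‖‖P z‖⁻¹ • P z‖ = 1 := by
    rw [norm_smul, norm_inv, norm_norm, inv_mul_cancel₀ hPz.ne']
  have hSu : ‖S (E (‖P z‖⁻¹ • P z))‖ = 1 := by
    rw [map_smul, map_smul, norm_smul, hSP, norm_inv, norm_norm, inv_mul_cancel₀ hPz.ne']
  refine ⟨S.comp Ec, ‖P z‖⁻¹ • P z, hu, ?_, ?_, ?_, ?_⟩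
  · apply le_antisymm
    · exact ContinuousLinearMap.opNorm_le_bound _ zero_le_one fun x => by
        rw [one_mul]; exact hSE x
    · have := (S.comp Ec).le_opNorm (‖P z‖⁻¹ • P z)
      rw [hu, mul_one, ContinuousLinearMap.comp_apply, hEc, hSu] at this
      exact this
  · rw [ContinuousLinearMap.comp_apply, hEc, hSu]
  · have h1 : ‖‖P z‖⁻¹ • P z - P z‖ = 1 - ‖P z‖ := by
      have : ‖P z‖⁻¹ • P z - P z = (1 - ‖P z‖) • (‖P z‖⁻¹ • P z) := by
        rw [sub_smul, one_smul, smul_smul, mul_inv_cancel₀ hPz.ne', one_smul]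
      rw [this, norm_smul, hu, mul_one, Real.norm_eq_abs, abs_of_nonneg]
      have := hPn z
      linarith
    have h2 := norm_sub_le_norm_sub_add_norm_sub (‖P z‖⁻¹ • P z) (P z) x₀
    linarith
  · refine lt_of_le_of_lt ?_ hST
    refine ContinuousLinearMap.opNorm_le_bound _ (norm_nonneg _) fun x => ?_
    have := (S - T₀.comp Pc).le_opNorm (E x)
    simpa only [ContinuousLinearMap.sub_apply, ContinuousLinearMap.comp_apply, hPc, hEc, hPE,
      hE] using this

/-- Each `X k` inherits the BPB property of the `ℓ₁`-sum. -/
theorem bpb_of_lp_one {Y : Type*} {X : ℕ → Type*} [∀ n, NormedAddCommGroup (X n)]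
    [∀ n, NormedSpace ℝ (X n)] [NormedAddCommGroup Y] [NormedSpace ℝ Y]
    {η : ℝ → ℝ} (h : BPBpWith (lp X 1) Y η) (k : ℕ) : BPBpWith (X k) Y η := by
  refine bpb_of_L_summand (Z := lp X 1)
    { toFun := fun x => lp.single 1 k x
      map_add' := fun x y => lp.single_add 1 k x y
      map_smul' := fun c x => lp.single_smul 1 k c x }
    { toFun := fun z => z k
      map_add' := fun x y => rfl
      map_smul' := fun c x => rfl } ?_ ?_ ?_ h
  · intro x
    exact lp.single_apply_self 1 k x
  · intro x
    exact lp.norm_single (by norm_num) k x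
  · intro z
    have := lp.norm_compl_sum_single (p := 1) (by norm_num) z {k}
    simp only [ENNReal.toReal_one, Real.rpow_one, Finset.sum_singleton] at this
    change ‖z - lp.single 1 k (z k)‖ + ‖z k‖ = ‖z‖
    linarith

theorem universal_BPB_range_has_universal_eta.{u} (Y : Type u)
    [NormedAddCommGroup Y] [NormedSpace ℝ Y] [CompleteSpace Y]
    (h : ∀ (Z : Type u) [NormedAddCommGroup Z] [NormedSpace ℝ Z] [CompleteSpace Z],
      HasBPBp Z Y) :
    ∃ ηY : ℝ → ℝ, (∀ ε ∈ Set.Ioo (0 : ℝ) 1, 0 < ηY ε) ∧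
      ∀ (X : Type u) [NormedAddCommGroup X] [NormedSpace ℝ X] [CompleteSpace X],
        BPBpWith X Y ηY := by
  have key : ∀ ε : ℝ, ∃ δ : ℝ, ε ∈ Set.Ioo (0 : ℝ) 1 → 0 < δ ∧
      ∀ (X : Type u) [NormedAddCommGroup X] [NormedSpace ℝ X] [CompleteSpace X]
        (T₀ : X →L[ℝ] Y) (x₀ : X), ‖T₀‖ = 1 → ‖x₀‖ = 1 → 1 - δ < ‖T₀ x₀‖ →
      ∃ (S : X →L[ℝ] Y) (x : X),
        ‖x‖ = 1 ∧ ‖S‖ = 1 ∧ ‖S x‖ = 1 ∧ ‖x - x₀‖ < ε ∧ ‖S - T₀‖ < ε := by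
    intro ε
    by_contra hcon
    have hcon' : ∀ δ : ℝ, ε ∈ Set.Ioo (0 : ℝ) 1 ∧ (0 < δ → ∃ (X : Type u)
        (_ : NormedAddCommGroup X) (_ : NormedSpace ℝ X) (_ : CompleteSpace X)
        (T₀ : X →L[ℝ] Y) (x₀ : X), ‖T₀‖ = 1 ∧ ‖x₀‖ = 1 ∧ 1 - δ < ‖T₀ x₀‖ ∧
      ¬ ∃ (S : X →L[ℝ] Y) (x : X),
        ‖x‖ = 1 ∧ ‖S‖ = 1 ∧ ‖S x‖ = 1 ∧ ‖x - x₀‖ < ε ∧ ‖S - T₀‖ < ε) := by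
      intro δ
      by_contra hδ
      refine hcon ⟨δ, fun hε => ?_⟩
      by_contra h2
      refine hδ ⟨hε, fun hpos => ?_⟩
      by_contra h3
      refine h2 ⟨hpos, fun X _ _ _ T₀ x₀ hT hx hTx => ?_⟩
      by_contra h4
      exact h3 ⟨X, inferInstance, inferInstance, inferInstance, T₀, x₀, hT, hx, hTx, h4⟩
    have hε := (hcon' 0).1
    choose X i1 i2 i3 T x hT hx hTx hno using
      fun n : ℕ => (hcon' (1 / ((n : ℝ) + 1))).2 Nat.one_div_pos_of_nat
    obtain ⟨η, hη, hZ⟩ := h (lp X 1)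
    obtain ⟨n, hn⟩ := exists_nat_one_div_lt (hη ε hε)
    have hTn := hTx n
    exact hno n (bpb_of_lp_one hZ n ε hε (T n) (x n) (hT n) (hx n) (by linarith))
  choose ηY hηY using key
  exact ⟨ηY, fun ε hε => (hηY ε hε).1, fun X _ _ _ ε hε T₀ x₀ h1 h2 h3 =>
    (hηY ε hε).2 X T₀ x₀ h1 h2 h3⟩
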